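/- Let 1 ≤ p < n, let r be an integer with p ≤ r < n such that |λ_p|/2 ≤ λ_p − λ_{r+1}, set x := max_{1≤i,j≤r} |u_iᵀ E u_j|, and assume 0 < 4‖E‖ ≤ δ_p := λ_p − λ_{p+1} ≤ |λ_p|/4. Then M₁ ≤ 70 ( (‖E‖/|λ_p|)·log(6σ₁/δ_p) + r²x/δ_p ). -/

import Mathlib

open Matrix

/-- The spectral norm (ℓ²→ℓ² operator norm) of a matrix. -/
noncomputable def specNorm {𝕜 : Type*} [RCLike 𝕜] {m n : ℕ}
    (M : Matrix (Fin m) (Fin n) 𝕜) : ℝ :=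
  ‖LinearMap.toContinuousLinearMap (Matrix.toEuclideanLin M)‖

/-- The resolvent `(zI − A)⁻¹` of a real matrix `A`, regarded as a complex matrix. -/
noncomputable def res {n : ℕ} (A : Matrix (Fin n) (Fin n) ℝ) (z : ℂ) :
    Matrix (Fin n) (Fin n) ℂ :=
  (z • (1 : Matrix (Fin n) (Fin n) ℂ) - A.map Complex.ofReal)⁻¹

open scoped Matrix.Norms.L2Operator in
lemma specNorm_eq_l2 {𝕜 : Type*} [RCLike 𝕜] {m n : ℕ} (M : Matrix (Fin m) (Fin n) 𝕜) :
    specNorm M = ‖M‖ := rfl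

open scoped Matrix.Norms.L2Operator in
lemma l2_single {n : ℕ} (i j : Fin n) (c : ℂ) :
    ‖(Matrix.single i j c : Matrix (Fin n) (Fin n) ℂ)‖ ≤ ‖c‖ := by
  have h := Matrix.l2_opNorm_conjTranspose_mul_self (Matrix.single i j c)
  rw [Matrix.conjTranspose_single, Matrix.single_mul_single_same,
    ← Matrix.diagonal_single, Matrix.l2_opNorm_diagonal, Pi.norm_single, norm_mul, norm_star] at h
  have h0 := norm_nonneg (Matrix.single i j c : Matrix (Fin n) (Fin n) ℂ)
  exact (abs_le_of_sq_le_sq' (by nlinarith) (norm_nonneg c)).2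

open scoped Matrix.Norms.L2Operator in
lemma l2_le_sum {n : ℕ} (M : Matrix (Fin n) (Fin n) ℂ) :
    ‖M‖ ≤ ∑ i, ∑ j, ‖M i j‖ := by
  conv_lhs => rw [Matrix.matrix_eq_sum_single M]
  refine (norm_sum_le _ _).trans (Finset.sum_le_sum fun i _ => ?_)
  exact (norm_sum_le _ _).trans (Finset.sum_le_sum fun j _ => l2_single _ _ _)

open scoped Matrix.Norms.L2Operator in
lemma l2_map_le {n : ℕ} (E : Matrix (Fin n) (Fin n) ℝ) :
    ‖E.map Complex.ofReal‖ ≤ ‖E‖ := by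
  rw [Matrix.l2_opNorm_def]
  refine ContinuousLinearMap.opNorm_le_bound _ (norm_nonneg _) fun v => ?_
  have h0 := norm_nonneg E
  refine (abs_le_of_sq_le_sq' ?_ (mul_nonneg h0 (norm_nonneg v))).2
  have ha := Matrix.l2_opNorm_mulVec E (WithLp.toLp 2 fun i => (v i).re)
  have hb := Matrix.l2_opNorm_mulVec E (WithLp.toLp 2 fun i => (v i).im)
  have ha2 := pow_le_pow_left₀ (norm_nonneg _) ha 2
  have hb2 := pow_le_pow_left₀ (norm_nonneg _) hb 2
  rw [mul_pow, EuclideanSpace.real_norm_sq_eq, EuclideanSpace.real_norm_sq_eq] at ha2 hb2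
  rw [mul_pow, EuclideanSpace.norm_sq_eq, EuclideanSpace.norm_sq_eq]
  have e1 : ∑ i, ‖v i‖ ^ 2 = ∑ i, (v i).re ^ 2 + ∑ i, (v i).im ^ 2 := by
    rw [← Finset.sum_add_distrib]
    refine Finset.sum_congr rfl fun i _ => ?_
    rw [Complex.sq_norm, Complex.normSq_apply]; ring
  have e2 : ∑ i, ‖(((Matrix.toEuclideanLin (𝕜 := ℂ) ≪≫ₗ LinearMap.toContinuousLinearMap)
      (E.map Complex.ofReal)) v) i‖ ^ 2
      = ∑ i, ((E *ᵥ fun i => (v i).re) i) ^ 2 + ∑ i, ((E *ᵥ fun i => (v i).im) i) ^ 2 := by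
    rw [← Finset.sum_add_distrib]
    refine Finset.sum_congr rfl fun i _ => ?_
    rw [Complex.sq_norm, Complex.normSq_apply]
    simp [Matrix.mulVec, dotProduct]
    ring
  rw [e1, e2]
  simp at ha2 hb2
  nlinarith

lemma integral_bounds {a T : ℝ} (ha : 0 < a) (hT : 0 ≤ T) :
    (∫ t in (-T)..T, 1 / (a ^ 2 + t ^ 2)) ≤ 4 / a := by
  have hd : ∀ t ∈ Set.uIcc (-T) T,
      HasDerivAt (fun t => Real.arctan (t / a) / a) (1 / (a ^ 2 + t ^ 2)) t := by
    intro t _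
    have := (((hasDerivAt_id' t).div_const a).arctan).div_const a
    refine this.congr_deriv ?_
    have : a ^ 2 + t ^ 2 ≠ 0 := by positivity
    field_simp
  rw [intervalIntegral.integral_eq_sub_of_hasDerivAt hd]
  · have h1 := Real.arctan_lt_pi_div_two (T / a)
    have h2 := Real.pi_le_four
    rw [neg_div, Real.arctan_neg, neg_div, sub_neg_eq_add, ← add_div]
    gcongr
    linarith
  · apply Continuous.intervalIntegrable
    exact continuous_const.div (by fun_prop) fun t => by positivity

lemma integral_bounds' {a T : ℝ} (ha : 0 < a) :
    (∫ t in (-T)..T, 1 / Real.sqrt (a ^ 2 + t ^ 2)) = 2 * Real.arsinh (T / a) := by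
  have hd : ∀ t ∈ Set.uIcc (-T) T,
      HasDerivAt (fun t => Real.arsinh (t / a)) (1 / Real.sqrt (a ^ 2 + t ^ 2)) t := by
    intro t _
    have := ((hasDerivAt_id' t).div_const a).arsinh
    refine this.congr_deriv ?_
    have e : a ^ 2 + t ^ 2 = a ^ 2 * (1 + (t / a) ^ 2) := by field_simp
    rw [e, Real.sqrt_mul (by positivity), Real.sqrt_sq ha.le]
    have : Real.sqrt (1 + (t / a) ^ 2) ≠ 0 := by positivity
    simp only [smul_eq_mul]
    field_simp
  rw [intervalIntegral.integral_eq_sub_of_hasDerivAt hd]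
  · rw [neg_div, Real.arsinh_neg]; ring
  · apply Continuous.intervalIntegrable
    exact continuous_const.div (by fun_prop) fun t => by positivity

lemma arsinh_le_log {s : ℝ} (hs : 4 ≤ s) : Real.arsinh (4 * s) ≤ 2 * Real.log (6 * s) := by
  have : 2 * Real.log (6 * s) = Real.log ((6 * s) ^ 2) := by
    rw [Real.log_pow]; norm_num
  rw [this, Real.arsinh]
  apply Real.log_le_log
  · positivity
  · have : Real.sqrt (1 + (4 * s) ^ 2) ≤ 1 + 4 * s := by
      rw [Real.sqrt_le_left (by linarith)]
      nlinarith
    nlinarith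

open scoped Matrix.Norms.L2Operator in
/-- The pointwise estimate for `d F d` with `d` diagonal. -/
lemma diag_bound {n : ℕ} (F : Matrix (Fin n) (Fin n) ℂ) (d : Fin n → ℂ) (r : ℕ) (hr : r ≤ n)
    (x e α β : ℝ) (hα : 0 ≤ α) (hβ : 0 ≤ β) (hx0 : 0 ≤ x) (he : ‖F‖ ≤ e)
    (hF : ∀ i j : Fin n, i.val < r → j.val < r → ‖F i j‖ ≤ x)
    (hd1 : ∀ i : Fin n, ‖d i‖ ≤ α) (hd2 : ∀ i : Fin n, r ≤ i.val → ‖d i‖ ≤ β) :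
    ‖Matrix.diagonal d * F * Matrix.diagonal d‖ ≤
      (r : ℝ) ^ 2 * x * α ^ 2 + 2 * (e * (α * β)) + e * β ^ 2 := by
  set d1 : Fin n → ℂ := fun i => if i.val < r then d i else 0 with hd1def
  set d2 : Fin n → ℂ := fun i => if i.val < r then 0 else d i with hd2def
  have hsplit : Matrix.diagonal d = Matrix.diagonal d1 + Matrix.diagonal d2 := by
    rw [Matrix.diagonal_add]
    congr 1
    ext i
    by_cases h : i.val < r <;> simp [hd1def, hd2def, h]
  have n1 : ‖Matrix.diagonal d1‖ ≤ α := by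
    rw [Matrix.l2_opNorm_diagonal, pi_norm_le_iff_of_nonneg hα]
    intro i
    by_cases h : i.val < r <;> simp [hd1def, h, hd1, hα]
  have n2 : ‖Matrix.diagonal d2‖ ≤ β := by
    rw [Matrix.l2_opNorm_diagonal, pi_norm_le_iff_of_nonneg hβ]
    intro i
    by_cases h : i.val < r
    · simp [hd2def, h, hβ]
    · simpa [hd2def, h] using hd2 i (not_lt.mp h)
  have he0 : 0 ≤ e := (norm_nonneg F).trans he
  have key : ∀ (P Q : Matrix (Fin n) (Fin n) ℂ) (s t : ℝ), 0 ≤ s → ‖P‖ ≤ s → ‖Q‖ ≤ t →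
      ‖P * F * Q‖ ≤ s * e * t := by
    intro P Q s t hs hP hQ
    refine (norm_mul_le _ _).trans ?_
    refine mul_le_mul ((norm_mul_le _ _).trans ?_) hQ (norm_nonneg _) (by positivity)
    exact mul_le_mul hP he (norm_nonneg _) hs
  have b11 : ‖Matrix.diagonal d1 * F * Matrix.diagonal d1‖ ≤ (r : ℝ) ^ 2 * x * α ^ 2 := by
    refine (l2_le_sum _).trans ?_
    have hent : ∀ i j : Fin n, ‖(Matrix.diagonal d1 * F * Matrix.diagonal d1) i j‖ ≤
        (if i.val < r then (1:ℝ) else 0) * (if j.val < r then (1:ℝ) else 0) * (x * α ^ 2) := by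
      intro i j
      rw [Matrix.mul_diagonal, Matrix.diagonal_mul]
      by_cases hi : i.val < r
      · by_cases hj : j.val < r
        · simp only [hd1def, hi, hj, if_true, norm_mul, one_mul]
          calc ‖d i‖ * ‖F i j‖ * ‖d j‖ ≤ α * x * α := by
                gcongr
                · exact hd1 i
                · exact hF i j hi hj
                · exact hd1 j
            _ = _ := by ring
        · simp [hd1def, hj]
      · simp [hd1def, hi]
    refine (Finset.sum_le_sum fun i _ => Finset.sum_le_sum fun j _ => hent i j).trans ?_
    have hc : ∑ i : Fin n, (if i.val < r then (1:ℝ) else 0) = r := by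
      rw [Fin.sum_univ_eq_sum_range (fun k => if k < r then (1:ℝ) else 0) n,
        Finset.sum_ite, Finset.sum_const_zero, add_zero, Finset.sum_const, nsmul_eq_mul, mul_one]
      congr 1
      have : Finset.filter (fun k => k < r) (Finset.range n) = Finset.range r := by
        ext k; simp; omega
      rw [this, Finset.card_range]
    simp only [← Finset.sum_mul, ← Finset.mul_sum, hc]
    exact le_of_eq (by ring)
  have b12 := key _ _ _ _ hα n1 n2
  have b21 := key _ _ _ _ hβ n2 n1
  have b22 := key _ _ _ _ hβ n2 n2
  have hexp : Matrix.diagonal d * F * Matrix.diagonal d =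
      Matrix.diagonal d1 * F * Matrix.diagonal d1 + Matrix.diagonal d1 * F * Matrix.diagonal d2
      + Matrix.diagonal d2 * F * Matrix.diagonal d1
      + Matrix.diagonal d2 * F * Matrix.diagonal d2 := by
    rw [hsplit]; noncomm_ring
  rw [hexp]
  refine (norm_add_le _ _).trans ?_
  refine (add_le_add (norm_add_le _ _) le_rfl).trans ?_
  refine (add_le_add (add_le_add (norm_add_le _ _) le_rfl) le_rfl).trans ?_
  nlinarith

open scoped Matrix.Norms.L2Operator in
lemma abs_eig_le {n : ℕ} (A : Matrix (Fin n) (Fin n) ℝ) (v : Fin n → ℝ) (l : ℝ)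
    (hv : v ⬝ᵥ v = 1) (h : A *ᵥ v = l • v) : |l| ≤ ‖A‖ := by
  have hn : ‖(WithLp.toLp 2 v : EuclideanSpace ℝ (Fin n))‖ = 1 := by
    rw [EuclideanSpace.norm_eq]
    simp only [Real.norm_eq_abs, sq_abs]
    simp only [dotProduct, ← pow_two] at hv
    rw [hv, Real.sqrt_one]
  have := Matrix.l2_opNorm_mulVec A (WithLp.toLp 2 v)
  simp only [h] at this
  change ‖(WithLp.toLp 2 (l • v) : EuclideanSpace ℝ (Fin n))‖ ≤ _ at this
  rw [WithLp.toLp_smul, norm_smul, hn] at this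
  simpa using this

lemma norm_inv_le {z : ℝ} {t l c : ℝ} (hc : 0 < c) (h : c ≤ |z - l|) :
    ‖((z + t * Complex.I : ℂ) - l)⁻¹‖ ≤ 1 / Real.sqrt (c ^ 2 + t ^ 2) := by
  rw [norm_inv, ← one_div]
  have hs : 0 < Real.sqrt (c ^ 2 + t ^ 2) := by positivity
  refine one_div_le_one_div_of_le hs ?_
  have e : ((z + t * Complex.I : ℂ) - l) = ((z - l : ℝ) : ℂ) + t * Complex.I := by
    push_cast; ring
  rw [e, Complex.norm_add_mul_I]
  apply Real.sqrt_le_sqrt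
  have : c ^ 2 ≤ |z - l| ^ 2 := by gcongr
  rw [sq_abs] at this
  linarith

open scoped Matrix.Norms.L2Operator in
/-- Pointwise bound of the integrand. -/
lemma pointwise {n : ℕ} (hn : 0 < n) (A E : Matrix (Fin n) (Fin n) ℝ)
    (l : Fin n → ℝ) (w : Fin n → (Fin n → ℝ))
    (hw : ∀ i j, w i ⬝ᵥ w j = if i = j then 1 else 0)
    (hwe : ∀ i, A *ᵥ w i = l i • w i)
    (r : ℕ) (hr : r ≤ n) (x a b x₀ t : ℝ) (ha : 0 < a) (hb : 0 < b) (hx0 : 0 ≤ x)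
    (hxE : ∀ i j : Fin n, i.val < r → j.val < r → |w i ⬝ᵥ E *ᵥ w j| ≤ x)
    (hla : ∀ i, a ≤ |x₀ - l i|) (hlb : ∀ i : Fin n, r ≤ i.val → b ≤ |x₀ - l i|) :
    ‖res A (x₀ + t * Complex.I) * E.map Complex.ofReal * res A (x₀ + t * Complex.I)‖ ≤
      (r : ℝ) ^ 2 * x * (1 / (a ^ 2 + t ^ 2))
      + 2 * (‖E‖ / b) * (1 / Real.sqrt (a ^ 2 + t ^ 2)) + ‖E‖ * (1 / (b ^ 2 + t ^ 2)) := by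
  haveI : Nonempty (Fin n) := ⟨⟨0, hn⟩⟩
  set U : Matrix (Fin n) (Fin n) ℝ := Matrix.of fun k i => w i k with hU
  have hUU : Uᵀ * U = 1 := by
    ext i j
    rw [Matrix.mul_apply, Matrix.one_apply, ← hw i j]
    rfl
  have hAU : A * U = U * Matrix.diagonal l := by
    ext k i
    rw [Matrix.mul_diagonal]
    have := congrFun (hwe i) k
    simp only [Pi.smul_apply, smul_eq_mul] at this
    rw [hU, Matrix.of_apply, mul_comm, ← this]
    rfl
  set V : Matrix (Fin n) (Fin n) ℂ := U.map Complex.ofReal with hV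
  have hVH : Vᴴ = Uᵀ.map Complex.ofReal := by
    ext i j; simp [hV]
  have hmapmul : ∀ M N : Matrix (Fin n) (Fin n) ℝ,
      (M * N).map Complex.ofReal = M.map Complex.ofReal * N.map Complex.ofReal := by
    intro M N
    exact Matrix.map_mul (f := Complex.ofRealHom)
  have hVV : Vᴴ * V = 1 := by
    rw [hVH, hV, ← hmapmul, hUU]
    ext i j; by_cases h : i = j <;> simp [Matrix.one_apply, h]
  have hVV' : V * Vᴴ = 1 := mul_eq_one_comm.mp hVV
  have hAV : A.map Complex.ofReal * V = V * Matrix.diagonal (fun i => (l i : ℂ)) := by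
    rw [hV, ← hmapmul, hAU, hmapmul]
    congr 1
    ext i j; by_cases h : i = j <;> simp [Matrix.diagonal_apply, h]
  set z : ℂ := x₀ + t * Complex.I with hz
  set d : Fin n → ℂ := fun i => (z - l i)⁻¹ with hd
  have hzne : ∀ i, z - l i ≠ 0 := by
    intro i h
    have h1 : x₀ - l i = 0 := by
      have := congrArg Complex.re h
      simpa [hz] using this
    have := hla i
    rw [h1, abs_zero] at this
    linarith
  have hres : res A z = V * Matrix.diagonal d * Vᴴ := by
    unfold res
    apply Matrix.inv_eq_right_inv
    have h1 : (z • (1 : Matrix (Fin n) (Fin n) ℂ) - A.map Complex.ofReal) * V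
        = V * Matrix.diagonal (fun i => z - l i) := by
      rw [sub_mul, hAV, Matrix.smul_mul, one_mul, ← Matrix.diagonal_sub, mul_sub]
      congr 1
      ext i j
      rw [Matrix.mul_diagonal, Matrix.smul_apply, smul_eq_mul, mul_comm]
    rw [← mul_assoc, ← mul_assoc, h1, mul_assoc V, Matrix.diagonal_mul_diagonal]
    have : (fun i => (z - l i) * d i) = fun _ => (1 : ℂ) := by
      ext i; exact mul_inv_cancel₀ (hzne i)
    rw [this, Matrix.diagonal_one, mul_one, hVV']
  have nV : ‖V‖ ≤ 1 := by
    have h := Matrix.l2_opNorm_conjTranspose_mul_self V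
    rw [hVV] at h
    have h1 : ‖(1 : Matrix (Fin n) (Fin n) ℂ)‖ = 1 := by
      rw [← Matrix.diagonal_one, Matrix.l2_opNorm_diagonal]
      simp
    rw [h1] at h
    nlinarith [norm_nonneg V]
  have nVH : ‖Vᴴ‖ ≤ 1 := by rw [Matrix.l2_opNorm_conjTranspose]; exact nV
  have conj : ∀ P M Q : Matrix (Fin n) (Fin n) ℂ, ‖P‖ ≤ 1 → ‖Q‖ ≤ 1 → ‖P * M * Q‖ ≤ ‖M‖ := by
    intro P M Q hP hQ
    calc ‖P * M * Q‖ ≤ ‖P * M‖ * ‖Q‖ := norm_mul_le _ _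
      _ ≤ (‖P‖ * ‖M‖) * ‖Q‖ := by gcongr; exact norm_mul_le _ _
      _ ≤ (1 * ‖M‖) * 1 := by gcongr
      _ = ‖M‖ := by ring
  set F : Matrix (Fin n) (Fin n) ℂ := Vᴴ * E.map Complex.ofReal * V with hF
  have nF : ‖F‖ ≤ ‖E‖ := (conj _ _ _ nVH nV).trans (l2_map_le E)
  have hFe : ∀ i j, F i j = ((w i ⬝ᵥ E *ᵥ w j : ℝ) : ℂ) := by
    intro i j
    rw [hF, hVH, hV, ← hmapmul, ← hmapmul, mul_assoc, Matrix.map_apply, Matrix.mul_apply]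
    rfl
  have hprod : res A z * E.map Complex.ofReal * res A z
      = V * (Matrix.diagonal d * F * Matrix.diagonal d) * Vᴴ := by
    rw [hres, hF]; simp only [mul_assoc]
  rw [hprod]
  refine (conj _ _ _ nV nVH).trans ?_
  have hE0 := norm_nonneg E
  refine (diag_bound F d r hr x ‖E‖ (1 / Real.sqrt (a ^ 2 + t ^ 2))
    (1 / Real.sqrt (b ^ 2 + t ^ 2)) (by positivity) (by positivity) hx0 nF ?_ ?_ ?_).trans ?_
  · intro i j hi hj
    rw [hFe, Complex.norm_real]
    exact hxE i j hi hj
  · intro i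
    exact norm_inv_le ha (hla i)
  · intro i hi
    exact norm_inv_le hb (hlb i hi)
  · rw [div_pow, div_pow, Real.sq_sqrt (by positivity), Real.sq_sqrt (by positivity), one_pow]
    have hbs : 1 / Real.sqrt (b ^ 2 + t ^ 2) ≤ 1 / b := by
      apply one_div_le_one_div_of_le hb
      apply Real.le_sqrt_of_sq_le
      nlinarith [sq_nonneg t]
    have : ‖E‖ * (1 / Real.sqrt (a ^ 2 + t ^ 2) * (1 / Real.sqrt (b ^ 2 + t ^ 2)))
        ≤ ‖E‖ * (1 / Real.sqrt (a ^ 2 + t ^ 2) * (1 / b)) := by gcongr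
    have e : 2 * (‖E‖ / b) * (1 / Real.sqrt (a ^ 2 + t ^ 2))
        = 2 * (‖E‖ * (1 / Real.sqrt (a ^ 2 + t ^ 2) * (1 / b))) := by ring
    rw [e]
    linarith

/-- **Bound on `M₁`** (Lemma 4.1 of the paper). Indices are 1-based;
`σ₁ = ‖A‖`, `x₀ = λ_p − δ_p/2`, `T = 2σ₁`. -/
theorem M1_bound
    {n : ℕ} (A E : Matrix (Fin n) (Fin n) ℝ) (hA : A.IsSymm) (hE : E.IsSymm)
    (lam : ℕ → ℝ) (u : ℕ → (Fin n → ℝ))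
    (hlam_mono : ∀ i ∈ Finset.Icc 1 n, ∀ j ∈ Finset.Icc 1 n, i ≤ j → lam j ≤ lam i)
    (hu_on : ∀ i ∈ Finset.Icc 1 n, ∀ j ∈ Finset.Icc 1 n,
      u i ⬝ᵥ u j = if i = j then 1 else 0)
    (hu_eig : ∀ i ∈ Finset.Icc 1 n, A *ᵥ u i = lam i • u i)
    (p : ℕ) (hp1 : 1 ≤ p) (hpn : p < n)
    (r : ℕ) (hpr : p ≤ r) (hrn : r < n)
    (hr_half : |lam p| / 2 ≤ lam p - lam (r + 1))
    (x : ℝ)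
    (hx : x = (Finset.Icc 1 r ×ˢ Finset.Icc 1 r).sup'
      (Finset.Nonempty.product (Finset.nonempty_Icc.mpr (le_trans hp1 hpr))
        (Finset.nonempty_Icc.mpr (le_trans hp1 hpr)))
      (fun q => |u q.1 ⬝ᵥ E *ᵥ u q.2|))
    (δp : ℝ) (hδp : δp = lam p - lam (p + 1))
    (hE_pos : 0 < specNorm E)
    (hgap_lo : 4 * specNorm E ≤ δp) (hgap_hi : δp ≤ |lam p| / 4)
    (x₀ T : ℝ) (hx₀ : x₀ = lam p - δp / 2) (hT : T = 2 * specNorm A)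
    (M1 : ℝ)
    (hM1 : M1 = ∫ t in (-T)..T, specNorm
      (res A (x₀ + t * Complex.I) * E.map Complex.ofReal
        * res A (x₀ + t * Complex.I))) :
    M1 ≤ 70 * (specNorm E / |lam p| * Real.log (6 * specNorm A / δp)
      + (r : ℝ) ^ 2 * x / δp) := by
  have hn : 0 < n := by omega
  have hδ : 0 < δp := by linarith
  have hL : 0 < |lam p| := by linarith
  have hσ : |lam p| ≤ specNorm A := by
    have hp : p ∈ Finset.Icc 1 n := Finset.mem_Icc.mpr ⟨hp1, hpn.le⟩
    have h1 := hu_on p hp p hp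
    rw [if_pos rfl] at h1
    exact abs_eig_le A (u p) (lam p) h1 (hu_eig p hp)
  have hT0 : 0 ≤ T := by rw [hT]; linarith
  have hxE : ∀ i ∈ Finset.Icc 1 r, ∀ j ∈ Finset.Icc 1 r, |u i ⬝ᵥ E *ᵥ u j| ≤ x := by
    intro i hi j hj
    rw [hx]
    exact Finset.le_sup' (fun q : ℕ × ℕ => |u q.1 ⬝ᵥ E *ᵥ u q.2|)
      (Finset.mem_product.mpr ⟨hi, hj⟩ : ((i, j) : ℕ × ℕ) ∈ _)
  have hx0 : 0 ≤ x := by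
    have h1 : 1 ∈ Finset.Icc 1 r := Finset.mem_Icc.mpr ⟨le_rfl, hp1.trans hpr⟩
    exact (abs_nonneg _).trans (hxE 1 h1 1 h1)
  have hmem : ∀ i : Fin n, i.val + 1 ∈ Finset.Icc 1 n := fun i =>
    Finset.mem_Icc.mpr ⟨by omega, by omega⟩
  have ha : 0 < δp / 2 := by linarith
  have hb : 0 < 3 * |lam p| / 8 := by linarith
  have hpt : ∀ t : ℝ, specNorm
      (res A (x₀ + t * Complex.I) * E.map Complex.ofReal * res A (x₀ + t * Complex.I)) ≤
      (r : ℝ) ^ 2 * x * (1 / ((δp / 2) ^ 2 + t ^ 2))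
      + 2 * (specNorm E / (3 * |lam p| / 8)) * (1 / Real.sqrt ((δp / 2) ^ 2 + t ^ 2))
      + specNorm E * (1 / ((3 * |lam p| / 8) ^ 2 + t ^ 2)) := by
    intro t
    refine pointwise hn A E (fun i => lam (i.val + 1)) (fun i => u (i.val + 1)) ?_ ?_ r hrn.le
      x (δp / 2) (3 * |lam p| / 8) x₀ t ha hb hx0 ?_ ?_ ?_
    · intro i j
      rw [hu_on _ (hmem i) _ (hmem j)]
      simp [Fin.ext_iff]
    · intro i; exact hu_eig _ (hmem i)
    · intro i j hi hj
      exact hxE _ (Finset.mem_Icc.mpr ⟨by omega, by omega⟩) _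
        (Finset.mem_Icc.mpr ⟨by omega, by omega⟩)
    · intro i
      rw [le_abs]
      rcases Nat.lt_or_ge i.val p with h | h
      · right
        have := hlam_mono _ (hmem i) p (Finset.mem_Icc.mpr ⟨hp1, hpn.le⟩) (by omega)
        linarith
      · left
        have := hlam_mono (p + 1) (Finset.mem_Icc.mpr ⟨by omega, by omega⟩) _ (hmem i) (by omega)
        linarith
    · intro i hi
      rw [le_abs]
      left
      have := hlam_mono (r + 1) (Finset.mem_Icc.mpr ⟨by omega, by omega⟩) _ (hmem i) (by omega)
      linarith
  have c1 : ∀ c : ℝ, 0 < c → Continuous fun t : ℝ => 1 / (c ^ 2 + t ^ 2) := fun c hc =>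
    continuous_const.div (by fun_prop) fun t => by positivity
  have c2 : ∀ c : ℝ, 0 < c → Continuous fun t : ℝ => 1 / Real.sqrt (c ^ 2 + t ^ 2) := fun c hc =>
    continuous_const.div (by fun_prop) fun t => by positivity
  have i1 : IntervalIntegrable (fun t : ℝ => (r : ℝ) ^ 2 * x * (1 / ((δp / 2) ^ 2 + t ^ 2)))
      MeasureTheory.volume (-T) T := ((c1 _ ha).const_mul _).intervalIntegrable _ _
  have i2 : IntervalIntegrable (fun t : ℝ => 2 * (specNorm E / (3 * |lam p| / 8)) *
      (1 / Real.sqrt ((δp / 2) ^ 2 + t ^ 2)))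
      MeasureTheory.volume (-T) T := ((c2 _ ha).const_mul _).intervalIntegrable _ _
  have i3 : IntervalIntegrable (fun t : ℝ => specNorm E * (1 / ((3 * |lam p| / 8) ^ 2 + t ^ 2)))
      MeasureTheory.volume (-T) T := ((c1 _ hb).const_mul _).intervalIntegrable _ _
  have hs4 : 4 ≤ specNorm A / δp := by
    rw [le_div_iff₀ hδ]; linarith
  have hbound : M1 ≤ (r : ℝ) ^ 2 * x * (4 / (δp / 2))
      + 2 * (specNorm E / (3 * |lam p| / 8)) * (2 * (2 * Real.log (6 * (specNorm A / δp))))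
      + specNorm E * (4 / (3 * |lam p| / 8)) := by
    have hlog : 0 ≤ Real.log (6 * (specNorm A / δp)) := Real.log_nonneg (by linarith)
    by_cases hintegr : IntervalIntegrable (fun t : ℝ => specNorm
      (res A (x₀ + t * Complex.I) * E.map Complex.ofReal
        * res A (x₀ + t * Complex.I))) MeasureTheory.volume (-T) T
    · rw [hM1]
      refine (intervalIntegral.integral_mono_on (by linarith) hintegr ((i1.add i2).add i3)
        (fun t _ => hpt t)).trans ?_
      rw [intervalIntegral.integral_add (i1.add i2) i3, intervalIntegral.integral_add i1 i2,
        intervalIntegral.integral_const_mul, intervalIntegral.integral_const_mul,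
        intervalIntegral.integral_const_mul, integral_bounds' ha]
      have h1 := integral_bounds ha hT0
      have h3 := integral_bounds hb hT0
      have h2 := arsinh_le_log hs4
      have e : T / (δp / 2) = 4 * (specNorm A / δp) := by rw [hT]; field_simp; ring
      rw [e]
      gcongr
    · rw [hM1, intervalIntegral.integral_undef hintegr]
      positivity
  refine hbound.trans ?_
  have hlog1 : 1 ≤ Real.log (6 * (specNorm A / δp)) := by
    rw [Real.le_log_iff_exp_le (by linarith)]
    have := Real.exp_one_lt_d9
    linarith
  rw [mul_div_assoc 6]
  set Λ := Real.log (6 * (specNorm A / δp))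
  have hq : 0 < specNorm E / |lam p| := by positivity
  have e1 : specNorm E / (3 * |lam p| / 8) = 8 / 3 * (specNorm E / |lam p|) := by field_simp
  have e2 : specNorm E * (4 / (3 * |lam p| / 8)) = 32 / 3 * (specNorm E / |lam p|) := by
    field_simp; ring
  have e3 : (r : ℝ) ^ 2 * x * (4 / (δp / 2)) = 8 * ((r : ℝ) ^ 2 * x / δp) := by
    field_simp; ring
  have hy : 0 ≤ (r : ℝ) ^ 2 * x / δp := by positivity
  rw [e1, e2, e3]
  have := mul_le_mul_of_nonneg_left hlog1 hq.le
  nlinarith
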